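/- arXiv:2405.03160 — 2 statements merged into one kernel-verified Lean document; each statement's English description precedes it below -/
import Mathlib

section
/- Let A = A_s + A_d ε be an n×n dual quaternion Hermitian matrix such that all eigenvalues of the quaternion Hermitian matrix A_s are simple. Then a dual number λ is a root of the characteristic polynomial p(λ) = Mdet(λ I − A) if and only if λ is an eigenvalue of A. -/
/-!
Write `p(l) = Mdet (l I - A)` and let `U A U* = diag (lam)` with `U` unitary. The dual numbers
`lam i` are exactly the eigenvalues of `A`, so it suffices to show `p(l) = ∏ i, (l - lam i)`: as the
standard parts of the `lam i` are distinct, at most one factor of this product is a nonunit, and the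
product vanishes only if that factor does (`prod_sub_eq_zero_iff`).

The product formula (`Mdet_eq_prod`) follows from two facts. First, `Mdet (X I - A)` is a monic
polynomial of degree `n` (`mooreOn_charmatrix`), and a polynomial of degree `n` with `n` central
roots whose differences are not zero divisors is determined by its leading coefficient
(`eval_eq_prod_roots`). Second, each `lam i` is a root of `p`: row `i` of `U` is a left null vector
`y` of the Hermitian matrix `H = lam i - A`, and for Hermitian `H` one has `y c * Mdet H = 0` for
every left null vector `y` (`mul_Mdet_eq_zero`); since `Mdet H` is central and `U U* = 1`, this gives
`Mdet H = 0`.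

The last annihilation property is proved combinatorially. For a set `S` of indices let `D S` be the
Moore determinant of the principal submatrix on `S`, and let `pathSum h j i S` be the signed sum of
the products of entries along all simple walks from `j` to `i` whose set of intermediate vertices
is `S`. By definition of the Moore order, `D S` is the subset convolution of `D` with the closed
path sums at the smallest index of `S` (`mooreOn_step`). For Hermitian weights closed path sums are
self-conjugate, hence central, and `Re (x y) = Re (y x)` shows that the expansion is valid at every
index, not just at the smallest one (`MooreData.D_insert`). Consequently the convolution of
`pathSum h k i` with `D` vanishes on sets containing `k` (`MooreData.conv_pathSum_D_eq_zero`), and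
summing `y k` times these convolutions for a fixed end point `c` leaves exactly `y c * Mdet H`, while
the first-step recursion of path sums and `y H = 0` make the sum zero.
-/

/-!
Formalization background for "Moore Determinant of Dual Quaternion Hermitian Matrices"
(Cui, Qi, Song, Wang).

A dual quaternion is `q = q_s + q_d ε` with `q_s, q_d` quaternions, `ε² = 0`; it is modeled
by `DualNumber (Quaternion ℝ)`.
-/

open Quaternion Matrix

noncomputable section

/-- Dual quaternions: dual numbers over the quaternions. -/
abbrev DualQuaternion : Type := DualNumber (Quaternion ℝ)

namespace DQPaper

/-- Conjugation of dual quaternions: `(q_s + q_d ε)* = q_s* + q_d* ε`. -/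
instance : Star DualQuaternion := ⟨fun q => (star q.fst, star q.snd)⟩

/-- The real part of a dual quaternion `q = q_s + q_d ε`, as the dual number
`Re(q_s) + Re(q_d) ε`. -/
def dqRe (q : DualQuaternion) : DualNumber ℝ := (q.fst.re, q.snd.re)

/-- The embedding of the dual numbers into the dual quaternions. -/
def toDQ (d : DualNumber ℝ) : DualQuaternion := ((d.fst : ℍ[ℝ]), (d.snd : ℍ[ℝ]))

/-- A dual quaternion is a dual number if its standard and dual parts are both real. -/
def IsDualNum (q : DualQuaternion) : Prop := ∃ d : DualNumber ℝ, q = toDQ d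

/-- A dual number `a + b ε` is nonnegative if `a > 0`, or `a = 0` and `b ≥ 0`. -/
def DNNonneg (u : DualNumber ℝ) : Prop := 0 < u.fst ∨ (u.fst = 0 ∧ 0 ≤ u.snd)

/-- The order on dual numbers: `u ≤ v` iff `v - u` is nonnegative. -/
def dnLe (u v : DualNumber ℝ) : Prop := DNNonneg (v - u)

open Classical in
/-- The magnitude of a dual quaternion `p = p_s + p_d ε`, as a dual number:
`|p| = |p_s| + ((p_s* p_d + p_d* p_s)/(2|p_s|)) ε` if `p_s ≠ 0`, and `|p| = |p_d| ε`
otherwise. -/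
def dqMag (p : DualQuaternion) : DualNumber ℝ :=
  if p.fst = 0 then (0, ‖p.snd‖)
  else (‖p.fst‖, ((star p.fst * p.snd + star p.snd * p.fst).re) / (2 * ‖p.fst‖))

/-- The cycle of the permutation `σ` containing `i`, listed as `[i, σ i, σ² i, …]`. -/
def cycleList {n : ℕ} (σ : Equiv.Perm (Fin n)) (i : Fin n) : List (Fin n) :=
  i :: (((List.range n).map (fun k => (σ ^ (k + 1)) i)).takeWhile (fun j => decide (j ≠ i)))

/-- The leaders (largest element of each cycle) of `σ`, listed in decreasing order;
this is the normalization used in the Chen determinant. -/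
def chenLeaders {n : ℕ} (σ : Equiv.Perm (Fin n)) : List (Fin n) :=
  ((List.finRange n).filter (fun i => (cycleList σ i).all (fun j => decide (j ≤ i)))).reverse

/-- All of `Fin n` listed in the normalized cycle order of the Chen determinant:
each cycle is led by its largest element, and cycles are ordered by decreasing leaders
(so the first cycle contains the last index). -/
def chenOrder {n : ℕ} (σ : Equiv.Perm (Fin n)) : List (Fin n) :=
  ((chenLeaders σ).map (cycleList σ)).flatten

/-- The Chen determinant of a square matrix over a (possibly noncommutative) ring:
`Cdet A = Σ_σ (−1)^{n−r} a_σ`, where `σ` runs over all permutations written in the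
normalized cycle form with `r` disjoint cycles, and `a_σ` is the ordered product of the
entries `A i (σ i)` along the normalized cycle order. -/
def Cdet {n : ℕ} {R : Type*} [Ring R] (A : Matrix (Fin n) (Fin n) R) : R :=
  ∑ σ : Equiv.Perm (Fin n),
    (-1 : R) ^ (n - (chenLeaders σ).length) * ((chenOrder σ).map (fun i => A i (σ i))).prod

/-- The leaders (smallest element of each cycle) of `σ`, listed in decreasing order;
this is the normalization used in the Moore determinant. -/
def mooreLeaders {n : ℕ} (σ : Equiv.Perm (Fin n)) : List (Fin n) :=
  ((List.finRange n).filter (fun i => (cycleList σ i).all (fun j => decide (i ≤ j)))).reverse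

/-- All of `Fin n` listed in the normalized cycle order of the Moore determinant:
each cycle is led by its smallest element, and cycles are ordered by decreasing leaders. -/
def mooreOrder {n : ℕ} (σ : Equiv.Perm (Fin n)) : List (Fin n) :=
  ((mooreLeaders σ).map (cycleList σ)).flatten

/-- The Moore determinant of a square matrix over a (possibly noncommutative) ring:
`Mdet A = Σ_σ s(σ) a_σ`, where `s(σ)` is the sign of `σ` and `a_σ` is the ordered product
of the entries `A i (σ i)` along the normalized (Moore) cycle order. -/
def Mdet {n : ℕ} {R : Type*} [Ring R] (A : Matrix (Fin n) (Fin n) R) : R :=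
  ∑ σ : Equiv.Perm (Fin n),
    ((Equiv.Perm.sign σ : ℤ) : R) * ((mooreOrder σ).map (fun i => A i (σ i))).prod

/-- The switching matrix `P_{ij}`: the identity matrix with rows `i` and `j` interchanged. -/
def switchMatrix {R : Type*} [Ring R] {n : ℕ} (i j : Fin n) : Matrix (Fin n) (Fin n) R :=
  Matrix.of fun k l =>
    if (k = i ∧ l = j) ∨ (k = j ∧ l = i) ∨ (k = l ∧ k ≠ i ∧ k ≠ j) then 1 else 0

/-- The multiplication matrix `P_{i;c}`: the identity matrix with the `(i,i)` entry
replaced by `c`. -/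
def mulMatrix {R : Type*} [Ring R] {n : ℕ} (i : Fin n) (c : R) : Matrix (Fin n) (Fin n) R :=
  Matrix.of fun k l => if k = l then (if k = i then c else 1) else 0

/-- The addition matrix `P_{ij;c}`: the identity matrix with an extra entry `c` in
position `(j,i)`, so that `P_{ij;c} * A` adds `c` times row `i` of `A` to row `j`. -/
def addMatrix {R : Type*} [Ring R] {n : ℕ} (i j : Fin n) (c : R) : Matrix (Fin n) (Fin n) R :=
  Matrix.of fun k l => (if k = l then 1 else 0) + (if k = j ∧ l = i then c else 0)

/-- The product `A i₁ i₂ * A i₂ i₃ * ⋯ * A i_{m-1} i_m` of matrix entries along a chain of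
indices `[i₁, …, i_m]`; applied to a closed chain `[i₁, …, i_m, i₁]` it gives the cycle
product `⟨i₁ … i_m i₁⟩ = a_{i₁ i₂} ⋯ a_{i_m i₁}`. -/
def chainProd {n : ℕ} (A : Matrix (Fin n) (Fin n) DualQuaternion) :
    List (Fin n) → DualQuaternion
  | [] => 1
  | [_] => 1
  | i :: j :: rest => A i j * chainProd A (j :: rest)

/-- A dual number `lam` is a (right) eigenvalue of the dual quaternion matrix `A` if
`A x = x lam` for some appreciable dual quaternion vector `x` (i.e. one whose standard
part is nonzero). -/
def IsEigenvalue {n : ℕ} (A : Matrix (Fin n) (Fin n) DualQuaternion)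
    (lam : DualNumber ℝ) : Prop :=
  ∃ x : Fin n → DualQuaternion,
    (fun i => (x i).fst) ≠ 0 ∧ A.mulVec x = fun i => x i * toDQ lam

/-- The dual quaternion Hermitian matrix `A` has the dual numbers `lam 1, …, lam n` as its
eigenvalues (counted with multiplicity), via the unitary diagonalization `U A U* = diag(lam)`
of Qi and Luo (2023). -/
def HasEigenvalues {n : ℕ} (A : Matrix (Fin n) (Fin n) DualQuaternion)
    (lam : Fin n → DualNumber ℝ) : Prop :=
  ∃ U : Matrix (Fin n) (Fin n) DualQuaternion,
    Uᴴ * U = 1 ∧ U * A * Uᴴ = Matrix.diagonal fun i => toDQ (lam i)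

/-! ### Subset convolution and path sums -/

section Convolution

variable {α Q : Type*} [DecidableEq α] [Ring Q]

/-- Subset convolution of two functions on finite sets. -/
def conv (f g : Finset α → Q) (S : Finset α) : Q :=
  ∑ A ∈ S.powerset, f A * g (S \ A)

lemma conv_congr {f f' g g' : Finset α → Q} {S : Finset α}
    (hf : ∀ A ⊆ S, f A = f' A) (hg : ∀ A ⊆ S, g A = g' A) : conv f g S = conv f' g' S := by
  refine Finset.sum_congr rfl fun A hA => ?_
  rw [hf A (Finset.mem_powerset.1 hA), hg _ Finset.sdiff_subset]

lemma conv_reflect (f g : Finset α → Q) (S : Finset α) :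
    conv f g S = ∑ A ∈ S.powerset, f (S \ A) * g A := by
  refine Finset.sum_bij' (fun A _ => S \ A) (fun A _ => S \ A) ?_ ?_ ?_ ?_ ?_
  · intro A _; simp
  · intro A _; simp
  · intro A hA; simpa using Finset.mem_powerset.1 hA
  · intro A hA; simpa using Finset.mem_powerset.1 hA
  · intro A hA
    rw [Finset.sdiff_sdiff_eq_self (Finset.mem_powerset.1 hA)]

lemma conv_comm {f g : Finset α → Q} {S : Finset α}
    (h : ∀ A ⊆ S, ∀ B ⊆ S, f A * g B = g B * f A) : conv f g S = conv g f S := by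
  rw [conv_reflect]
  refine Finset.sum_congr rfl fun A hA => ?_
  rw [h _ Finset.sdiff_subset _ (Finset.mem_powerset.1 hA)]

lemma conv_assoc (f g k : Finset α → Q) (S : Finset α) :
    conv (conv f g) k S = conv f (conv g k) S := by
  unfold conv
  simp only [Finset.sum_mul, Finset.mul_sum]
  rw [Finset.sum_sigma', Finset.sum_sigma']
  refine Finset.sum_bij' (fun x _ => ⟨x.2, x.1 \ x.2⟩) (fun x _ => ⟨x.1 ∪ x.2, x.1⟩)
    ?_ ?_ ?_ ?_ ?_
  · rintro ⟨A, B⟩ h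
    simp only [Finset.mem_sigma, Finset.mem_powerset] at h ⊢
    exact ⟨h.2.trans h.1, Finset.sdiff_subset_sdiff h.1 le_rfl⟩
  · rintro ⟨A, B⟩ h
    simp only [Finset.mem_sigma, Finset.mem_powerset] at h ⊢
    exact ⟨Finset.union_subset h.1 (h.2.trans Finset.sdiff_subset), Finset.subset_union_left⟩
  · rintro ⟨A, B⟩ h
    simp only [Finset.mem_sigma, Finset.mem_powerset] at h ⊢
    simp [Finset.union_eq_right.2 h.2]
  · rintro ⟨A, B⟩ h
    simp only [Finset.mem_sigma, Finset.mem_powerset] at h ⊢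
    have : Disjoint B A := Finset.disjoint_of_subset_left h.2 Finset.sdiff_disjoint
    simp [Finset.union_sdiff_cancel_left this.symm]
  · rintro ⟨A, B⟩ h
    simp only [Finset.mem_sigma, Finset.mem_powerset] at h ⊢
    have : (S \ B) \ (A \ B) = S \ A := by
      ext x; have := @h.2 x; simp only [Finset.mem_sdiff]; tauto
    rw [this, mul_assoc]

/-- Splitting a convolution according to which factor receives a marked element. -/
lemma conv_insert (f g : Finset α → Q) {S : Finset α} {k : α} (hk : k ∉ S) :
    conv f g (insert k S)
      = conv f (fun A => g (insert k A)) S + conv (fun A => f (insert k A)) g S := by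
  unfold conv
  rw [Finset.sum_powerset_insert hk]
  congr 1
  · refine Finset.sum_congr rfl fun A hA => ?_
    rw [Finset.insert_sdiff_of_notMem _ fun h => hk (Finset.mem_powerset.1 hA h)]
  · refine Finset.sum_congr rfl fun A hA => ?_
    congr 2
    ext x; by_cases hx : x = k <;> simp [hx, hk]

/-- Choosing a set and then an element of it is choosing the element first. -/
lemma sum_powerset_marked {M : Type*} [AddCommMonoid M] (f : α → Finset α → Finset α → M)
    (S : Finset α) :
    ∑ B ∈ S.powerset, ∑ m ∈ B, f m (B.erase m) (S \ B)
      = ∑ m ∈ S, ∑ B ∈ (S.erase m).powerset, f m B (S.erase m \ B) := by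
  rw [Finset.sum_sigma', Finset.sum_sigma']
  refine Finset.sum_bij' (fun x _ => ⟨x.2, x.1.erase x.2⟩) (fun x _ => ⟨insert x.1 x.2, x.1⟩)
    ?_ ?_ ?_ ?_ ?_
  · rintro ⟨B, m⟩ h
    simp only [Finset.mem_sigma, Finset.mem_powerset] at h ⊢
    exact ⟨h.1 h.2, Finset.erase_subset_erase _ h.1⟩
  · rintro ⟨m, B⟩ h
    simp only [Finset.mem_sigma, Finset.mem_powerset] at h ⊢
    exact ⟨Finset.insert_subset h.1 (h.2.trans (Finset.erase_subset _ _)),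
      Finset.mem_insert_self _ _⟩
  · rintro ⟨B, m⟩ h
    simp only [Finset.mem_sigma, Finset.mem_powerset] at h ⊢
    simp [Finset.insert_erase h.2]
  · rintro ⟨m, B⟩ h
    simp only [Finset.mem_sigma, Finset.mem_powerset] at h ⊢
    have : m ∉ B := fun hm => by simpa using h.2 hm
    simp [Finset.erase_insert this]
  · rintro ⟨B, m⟩ h
    simp only [Finset.mem_sigma, Finset.mem_powerset] at h ⊢
    have : S.erase m \ B.erase m = S \ B := by
      ext x; by_cases hx : x = m <;> simp [hx, h.2]
    rw [this]

end Convolution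

section Paths

variable {α Q : Type*} [DecidableEq α] [Ring Q]

/-- The product `h j l₁ * h l₁ l₂ * ⋯ * h l_r i` along the walk from `j` to `i` with the list `l`
of intermediate vertices. -/
def walkProd (h : α → α → Q) (j : α) : List α → α → Q
  | [], i => h j i
  | k :: l, i => h j k * walkProd h k l i

/-- The finite set of all orderings of the elements of a finite set. -/
def orderings (A : Finset α) : Finset (List α) := ⟨A.val.lists, Multiset.lists_nodup_finset A⟩

lemma mem_orderings {A : Finset α} {l : List α} :
    l ∈ orderings A ↔ l.Nodup ∧ l.toFinset = A := by
  have : l ∈ orderings A ↔ A.val = (l : Multiset α) := Multiset.mem_lists_iff _ _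
  rw [this]
  constructor
  · intro h
    have hn : l.Nodup := by rw [← Multiset.coe_nodup, ← h]; exact A.nodup
    refine ⟨hn, ?_⟩
    ext x; rw [List.mem_toFinset, ← Multiset.mem_coe, ← h, Finset.mem_val]
  · rintro ⟨hn, rfl⟩
    rw [List.toFinset_val, hn.dedup]

/-- The signed sum of the products along all simple walks from `j` to `i` whose set of intermediate
vertices is exactly `A`; each intermediate vertex contributes a sign. -/
def pathSum (h : α → α → Q) (j i : α) (A : Finset α) : Q :=
  (-1) ^ A.card * ∑ l ∈ orderings A, walkProd h j l i

lemma pathSum_empty (h : α → α → Q) (j i : α) : pathSum h j i ∅ = h j i := by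
  have : orderings (∅ : Finset α) = {[]} := by
    ext l; rw [mem_orderings]; simp +contextual
  simp [pathSum, this, walkProd]

lemma pathSum_rec (h : α → α → Q) (j i : α) (A : Finset α) :
    pathSum h j i A = (if A = ∅ then h j i else 0)
      - ∑ k ∈ A, h j k * pathSum h k i (A.erase k) := by
  split_ifs with hA
  · subst hA; simp [pathSum_empty]
  have key : ∑ l ∈ orderings A, walkProd h j l i
      = ∑ k ∈ A, ∑ l ∈ orderings (A.erase k), h j k * walkProd h k l i := by
    rw [Finset.sum_sigma']
    symm
    refine Finset.sum_bij (fun x _ => x.1 :: x.2) ?_ ?_ ?_ ?_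
    · rintro ⟨k, l⟩ hx
      simp only [Finset.mem_sigma, mem_orderings] at hx ⊢
      obtain ⟨hk, hl, hlA⟩ := hx
      have : k ∉ l := by rw [← List.mem_toFinset, hlA]; simp
      simp [this, hl, hlA, Finset.insert_erase hk]
    · rintro ⟨k, l⟩ _ ⟨k', l'⟩ _ hx
      simp only [List.cons.injEq] at hx
      obtain ⟨rfl, rfl⟩ := hx; rfl
    · intro l hl
      rw [mem_orderings] at hl
      obtain ⟨hl, rfl⟩ := hl
      cases l with
      | nil => simp at hA
      | cons k l =>
        rw [List.nodup_cons] at hl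
        refine ⟨⟨k, l⟩, ?_, rfl⟩
        simp [mem_orderings, hl]
    · intro x _; rfl
  rw [pathSum, key, zero_sub, ← Finset.sum_neg_distrib, Finset.mul_sum]
  refine Finset.sum_congr rfl fun k hk => ?_
  rw [pathSum, ← Finset.mul_sum, ← Finset.card_erase_add_one hk, pow_succ]
  rcases neg_one_pow_eq_or Q (A.erase k).card with h1 | h1 <;> rw [h1] <;> noncomm_ring

/-- First-step recursion for the path sums convolved with an arbitrary weight. -/
lemma conv_pathSum (h : α → α → Q) (j i : α) (g : Finset α → Q) (S : Finset α) :
    conv (pathSum h j i) g S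
      = h j i * g S - ∑ k ∈ S, h j k * conv (pathSum h k i) g (S.erase k) := by
  have h1 := sum_powerset_marked (fun m B E => h j m * (pathSum h m i B * g E)) S
  simp only [conv, Finset.mul_sum]
  rw [← h1]
  simp_rw [pathSum_rec h j i, sub_mul, Finset.sum_sub_distrib, Finset.sum_mul, mul_assoc]
  congr 1
  rw [Finset.sum_eq_single ∅] <;> simp +contextual

/-- A simple walk through a marked vertex `k` splits into its two halves. -/
lemma pathSum_insert (h : α → α → Q) (i k : α) (A : Finset α) (hk : k ∉ A) (j : α) :
    pathSum h j i (insert k A) = - conv (pathSum h j k) (pathSum h k i) A := by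
  induction hc : A.card generalizing A j with
  | zero =>
    obtain rfl := Finset.card_eq_zero.1 hc
    rw [conv_pathSum, pathSum_rec]
    simp
  | succ c ih =>
    rw [conv_pathSum, pathSum_rec, if_neg (Finset.insert_ne_empty _ _), Finset.sum_insert hk,
      Finset.erase_insert hk]
    have : ∑ m ∈ A, h j m * pathSum h m i ((insert k A).erase m)
        = - ∑ m ∈ A, h j m * conv (pathSum h m k) (pathSum h k i) (A.erase m) := by
      rw [← Finset.sum_neg_distrib]
      refine Finset.sum_congr rfl fun m hm => ?_
      have hmk : k ≠ m := fun e => hk (e ▸ hm)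
      rw [Finset.erase_insert_of_ne hmk, ih (A.erase m) (by simp [hk]) m
        (by rw [Finset.card_erase_of_mem hm, hc]; rfl), mul_neg]
    rw [this]; abel

end Paths

/-! ### Moore determinants of Hermitian weights -/

section Hermitian

variable {α Q : Type*} [LinearOrder α] [Ring Q] [StarRing Q]

lemma star_conv (f g : Finset α → Q) (S : Finset α) :
    star (conv f g S) = conv (fun A => star (g A)) (fun A => star (f A)) S := by
  rw [conv_reflect (fun A => star (g A)), conv, star_sum]
  simp only [star_mul]

/-- For a Hermitian weight, reversing walks conjugates the path sums. -/
lemma star_pathSum {h : α → α → Q} (hh : ∀ i j, star (h i j) = h j i) (j i : α) (A : Finset α) :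
    star (pathSum h j i A) = pathSum h i j A := by
  induction hc : A.card using Nat.strong_induction_on generalizing A j i with
  | _ c ih =>
  rcases A.eq_empty_or_nonempty with rfl | ⟨k, hk⟩
  · simp [pathSum_empty, hh]
  · obtain ⟨B, hkB, rfl⟩ : ∃ B, k ∉ B ∧ insert k B = A :=
      ⟨A.erase k, by simp, Finset.insert_erase hk⟩
    rw [pathSum_insert _ _ _ _ hkB, pathSum_insert _ _ _ _ hkB, star_neg, star_conv]
    rw [Finset.card_insert_of_notMem hkB] at hc
    congr 1
    refine conv_congr (fun E hE => ?_) (fun E hE => ?_) <;>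
    · have := Finset.card_le_card hE
      exact ih E.card (by omega) _ _ _ rfl

/-- The abstract setting of the Moore determinant: Hermitian elements are central, the real part
of a product does not depend on the order of the factors, there is no 2-torsion, the weight `h` is
Hermitian, and `D` is given on finite sets of indices by splitting off the cycle through the
smallest index. -/
structure MooreData (h : α → α → Q) (D : Finset α → Q) : Prop where
  central : ∀ a : Q, star a = a → ∀ b, a * b = b * a
  trace : ∀ a b : Q, a * star b + b * star a = star a * b + star b * a
  two : ∀ a b : Q, a + a = b + b → a = b
  herm : ∀ i j, star (h i j) = h j i
  empty : D ∅ = 1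
  step : ∀ (S : Finset α) (m : α), m ∈ S → (∀ x ∈ S, m ≤ x) →
    D S = conv D (pathSum h m m) (S.erase m)

namespace MooreData

variable {h : α → α → Q} {D : Finset α → Q}

lemma pathSum_comm (M : MooreData h D) (k : α) (A : Finset α) (b : Q) :
    pathSum h k k A * b = b * pathSum h k k A :=
  M.central _ (star_pathSum M.herm k k A) b

/-- The determinant of a Hermitian weight is self-conjugate, hence central. -/
lemma star_D (M : MooreData h D) (S : Finset α) : star (D S) = D S := by
  induction hc : S.card using Nat.strong_induction_on generalizing S with
  | _ c ih =>
  rcases S.eq_empty_or_nonempty with rfl | hS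
  · simp [M.empty]
  · have hm := S.min'_mem hS
    rw [M.step S _ hm fun x hx => S.min'_le x hx, star_conv]
    have : (fun A => star (pathSum h (S.min' hS) (S.min' hS) A))
        = pathSum h (S.min' hS) (S.min' hS) := funext fun A => star_pathSum M.herm _ _ A
    rw [this, conv_comm fun A _ B _ => M.pathSum_comm _ _ _]
    refine conv_congr (fun A hA => ?_) fun _ _ => rfl
    refine ih _ ?_ A rfl
    have h1 := Finset.card_le_card hA
    rw [Finset.card_erase_of_mem hm] at h1
    have := Finset.card_pos.2 hS
    omega

lemma D_comm (M : MooreData h D) (S : Finset α) (b : Q) : D S * b = b * D S := M.central _ (M.star_D S) b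

/-- The cycles through `m` and `k` have the same total weight whether they are started at `m` or
at `k`. Pairing each cycle with its reversal turns both sides into sums of terms
`x * star y + y * star x`, so this is where `Re (x y) = Re (y x)` enters. -/
lemma conv_cross (M : MooreData h D) (m k : α) (T : Finset α) :
    conv (pathSum h m k) (pathSum h k m) T = conv (pathSum h k m) (pathSum h m k) T := by
  apply M.two
  have e1 : ∀ A, pathSum h k m A = star (pathSum h m k A) :=
    fun A => (star_pathSum M.herm m k A).symm
  have h1 := conv_reflect (pathSum h m k) (pathSum h k m) T
  have h2 := conv_reflect (pathSum h k m) (pathSum h m k) T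
  nth_rewrite 2 [h1]
  nth_rewrite 2 [h2]
  simp only [conv, ← Finset.sum_add_distrib]
  refine Finset.sum_congr rfl fun A _ => ?_
  rw [e1, e1]
  exact M.trace _ _

/-- The determinant of a set may be expanded along the cycle through any of its elements. -/
lemma D_insert (M : MooreData h D) (k : α) (S : Finset α) (hk : k ∉ S) :
    D (insert k S) = conv (pathSum h k k) D S := by
  induction hc : S.card using Nat.strong_induction_on generalizing S k with
  | _ c ih =>
  have hne : (insert k S).Nonempty := Finset.insert_nonempty _ _
  obtain ⟨m, hm, hmin⟩ : ∃ m ∈ insert k S, ∀ x ∈ insert k S, m ≤ x :=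
    ⟨_, Finset.min'_mem _ hne, fun x hx => Finset.min'_le _ x hx⟩
  rw [M.step _ m hm hmin, conv_comm fun A _ B _ => (M.D_comm _ _)]
  by_cases hmk : m = k
  · subst hmk; rw [Finset.erase_insert hk]
  have hmS : m ∈ S := (Finset.mem_insert.1 hm).resolve_left hmk
  obtain ⟨T, hmT, rfl⟩ : ∃ T, m ∉ T ∧ insert m T = S :=
    ⟨S.erase m, by simp, Finset.insert_erase hmS⟩
  have hkT : k ∉ T := fun h => hk (Finset.mem_insert_of_mem h)
  have hTc : T.card < c := by rw [← hc, Finset.card_insert_of_notMem hmT]; omega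
  have e : (insert k (insert m T)).erase m = insert k T := by
    rw [Finset.erase_insert_of_ne (Ne.symm hmk), Finset.erase_insert hmT]
  rw [e, conv_insert _ _ hkT, conv_insert _ _ hmT]
  have a1 : ∀ x, x ∉ T → ∀ A ⊆ T, D (insert x A) = conv (pathSum h x x) D A := fun x hx A hA =>
    ih A.card ((Finset.card_le_card hA).trans_lt hTc) x A (fun h => hx (hA h)) rfl
  rw [conv_congr (fun _ _ => rfl) (a1 k hkT), conv_congr (fun _ _ => rfl) (a1 m hmT),
    ← conv_assoc, ← conv_assoc]
  congr 1
  · refine conv_congr (fun A _ => ?_) fun _ _ => rfl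
    exact conv_comm fun _ _ _ _ => M.pathSum_comm _ _ _
  · refine conv_congr (fun A hA => ?_) fun _ _ => rfl
    rw [pathSum_insert _ _ _ _ fun h => hkT (hA h), pathSum_insert _ _ _ _ fun h => hmT (hA h),
      M.conv_cross]

/-- Expansion along a repeated row vanishes: a configuration in which the walk from `k` to `i`
revisits `k` cancels against the one in which the revisiting loop is a separate cycle. -/
lemma conv_pathSum_D_eq_zero (M : MooreData h D) (k i : α) (S : Finset α) (hk : k ∈ S) :
    conv (pathSum h k i) D S = 0 := by
  obtain ⟨T, hkT, rfl⟩ : ∃ T, k ∉ T ∧ insert k T = S :=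
    ⟨S.erase k, by simp, Finset.insert_erase hk⟩
  have a1 : ∀ A ⊆ T, D (insert k A) = conv (pathSum h k k) D A := fun A hA =>
    M.D_insert k A fun h => hkT (hA h)
  have a2 : ∀ A ⊆ T, pathSum h k i (insert k A)
      = (-1) * conv (pathSum h k i) (pathSum h k k) A := fun A hA => by
    rw [pathSum_insert _ _ _ _ fun h => hkT (hA h), neg_one_mul,
      conv_comm fun _ _ _ _ => M.pathSum_comm _ _ _]
  rw [conv_insert _ _ hkT, conv_congr (fun _ _ => rfl) a1, conv_congr a2 fun _ _ => rfl,
    ← conv_assoc]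
  simp [conv]

/-- A left null vector of `h` is annihilated by the determinant. -/
lemma mul_D_univ_eq_zero [Fintype α] (M : MooreData h D) (y : α → Q)
    (hy : ∀ j, ∑ k, y k * h k j = 0) (c : α) :
    y c * D Finset.univ = 0 := by
  have h0 : ∑ k, y k * conv (pathSum h k c) D (Finset.univ.erase c) = 0 := by
    rw [Finset.sum_congr rfl fun k _ => congrArg (y k * ·) (conv_pathSum h k c D _)]
    simp_rw [mul_sub, Finset.mul_sum, ← mul_assoc]
    rw [Finset.sum_sub_distrib, Finset.sum_comm, ← Finset.sum_mul, hy, zero_mul]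
    simp_rw [← Finset.sum_mul, hy]
    simp
  rw [Finset.sum_eq_single c] at h0
  · rwa [← M.D_insert c _ (Finset.notMem_erase _ _), Finset.insert_erase (Finset.mem_univ c)] at h0
  · intro k _ hkc
    rw [M.conv_pathSum_D_eq_zero k c _ (by simp [hkc]), mul_zero]
  · simp

end MooreData

end Hermitian

/-! ### Cycle structure of the Moore determinant -/

section CycleLists

variable {n : ℕ}

/-- A duplicate-free list on which `σ` acts as the cyclic permutation of the list is the normalized
cycle of its first entry. -/
lemma cycleList_eq {σ : Equiv.Perm (Fin n)} {i : Fin n} {t : List (Fin n)}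
    (hn : (i :: t).Nodup) (hσ : ∀ x ∈ i :: t, σ x = (i :: t).formPerm x) :
    cycleList σ i = i :: t := by
  have hpow : ∀ k : ℕ, (σ ^ k) i = ((i :: t).formPerm ^ k) i ∧ (σ ^ k) i ∈ i :: t := by
    intro k
    induction k with
    | zero => simp
    | succ k ih =>
      rw [pow_succ', pow_succ', Equiv.Perm.mul_apply, Equiv.Perm.mul_apply, hσ _ ih.2, ih.1]
      refine ⟨rfl, ?_⟩
      rw [List.formPerm_mem_iff_mem, ← ih.1]; exact ih.2
  have hget : ∀ k : ℕ, (σ ^ k) i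
      = (i :: t)[k % (i :: t).length]'(Nat.mod_lt _ (Nat.zero_lt_succ _)) := fun k => by
    rw [(hpow k).1, List.formPerm_pow_apply_head _ _ hn]
  have hlen : t.length + 1 ≤ n := by
    have := hn.length_le_card
    simpa using this
  obtain ⟨s, hs⟩ : ∃ s, n = t.length + (s + 1) := ⟨n - (t.length + 1), by omega⟩
  have hrange : List.range n = List.range (t.length + (s + 1)) := congrArg _ hs
  have h1 : (List.range t.length).map (fun k => (σ ^ (k + 1)) i) = t := by
    refine List.ext_getElem (by simp) fun k h1 h2 => ?_
    rw [List.getElem_map, List.getElem_range, hget]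
    have : (k + 1) % (i :: t).length = k + 1 := Nat.mod_eq_of_lt (by simpa using h2)
    simp only [this, List.getElem_cons_succ]
  have h2 : (σ ^ (t.length + 1)) i = i := by
    rw [hget]; simp
  rw [cycleList, hrange, List.range_add, List.map_append, h1, List.takeWhile_append_of_pos,
    List.range_succ_eq_map]
  · simp [h2]
  · intro x hx
    have : i ∉ t := (List.nodup_cons.1 hn).1
    simp only [decide_eq_true_eq]
    rintro rfl
    exact this hx

lemma exists_cycleList (σ : Equiv.Perm (Fin n)) (i : Fin n) :
    ∃ t : List (Fin n), cycleList σ i = i :: t ∧ (i :: t).Nodup ∧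
      ∀ x ∈ i :: t, σ x = (i :: t).formPerm x := by
  suffices h : ∃ t : List (Fin n), (i :: t).Nodup ∧ ∀ x ∈ i :: t, σ x = (i :: t).formPerm x by
    obtain ⟨t, h1, h2⟩ := h
    exact ⟨t, cycleList_eq h1 h2, h1, h2⟩
  by_cases hi : σ i = i
  · exact ⟨[], by simp, by simp [hi]⟩
  · have hs : i ∈ σ.support := by simpa using hi
    have hpos := Equiv.Perm.length_toList_pos_of_mem_support σ i hs
    obtain ⟨a, t, hl⟩ := List.exists_cons_of_length_pos hpos
    have ha : a = i := by
      have := Equiv.Perm.toList_getElem_zero σ i hs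
      simpa [hl] using this
    subst ha
    refine ⟨t, hl ▸ Equiv.Perm.nodup_toList σ a, fun x hx => ?_⟩
    rw [← hl] at hx ⊢
    rw [Equiv.Perm.formPerm_toList, (Equiv.Perm.mem_toList_iff.1 hx).1.cycleOf_apply]

lemma map_cycle_eq {σ : Equiv.Perm (Fin n)} {i : Fin n} {t : List (Fin n)}
    (hn : (i :: t).Nodup) (hσ : ∀ x ∈ i :: t, σ x = (i :: t).formPerm x) :
    (i :: t).map σ = t ++ [i] := by
  rw [List.map_congr_left hσ]
  refine List.ext_getElem (by simp) fun k h1 h2 => ?_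
  rw [List.getElem_map, List.formPerm_apply_getElem _ hn]
  have e : t ++ [i] = (i :: t).rotate 1 := by simp
  simp only [e, List.getElem_rotate]

lemma walkProd_eq {Q : Type*} [Ring Q] (h : Fin n → Fin n → Q) (j i : Fin n) (t : List (Fin n)) :
    walkProd h j t i = (List.zipWith h (j :: t) (t ++ [i])).prod := by
  induction t generalizing j with
  | nil => simp [walkProd]
  | cons k t ih => rw [walkProd, ih]; simp

/-- The product of the entries along the normalized cycle of `σ` through `i`. -/
def cycleProd {Q : Type*} [Ring Q] (h : Fin n → Fin n → Q) (σ : Equiv.Perm (Fin n))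
    (i : Fin n) : Q :=
  ((cycleList σ i).map fun x => h x (σ x)).prod

lemma cycleProd_eq {Q : Type*} [Ring Q] (h : Fin n → Fin n → Q) {σ : Equiv.Perm (Fin n)}
    {i : Fin n} {t : List (Fin n)}
    (hn : (i :: t).Nodup) (hσ : ∀ x ∈ i :: t, σ x = (i :: t).formPerm x) :
    cycleProd h σ i = walkProd h i t i := by
  rw [cycleProd, cycleList_eq hn hσ, walkProd_eq, ← map_cycle_eq hn hσ]
  rw [List.zipWith_map_right, List.zipWith_self]

lemma sign_formPerm_cons (i : Fin n) (t : List (Fin n)) (hn : (i :: t).Nodup) :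
    Equiv.Perm.sign (i :: t).formPerm = (-1) ^ t.length := by
  induction t generalizing i with
  | nil => simp
  | cons k t ih =>
    have hik : i ≠ k := by rintro rfl; simp at hn
    rw [List.formPerm_cons_cons, Equiv.Perm.sign_mul, ih k (List.nodup_cons.1 hn).2,
      Equiv.Perm.sign_swap hik, List.length_cons, pow_succ, mul_comm]

/-- The cycle leaders of `σ` lying in `S`, in decreasing order. -/
def leadersOn (S : Finset (Fin n)) (σ : Equiv.Perm (Fin n)) : List (Fin n) :=
  ((List.finRange n).filter
    (fun i => decide (i ∈ S ∧ ∀ j ∈ cycleList σ i, i ≤ j))).reverse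

/-- The Moore determinant of the principal submatrix with index set `S`; permutations of `S` are
encoded as permutations of `Fin n` supported in `S`. -/
def mooreOn {Q : Type*} [Ring Q] (h : Fin n → Fin n → Q) (S : Finset (Fin n)) : Q :=
  ∑ σ : Equiv.Perm (Fin n) with σ.support ⊆ S,
    ((Equiv.Perm.sign σ : ℤ) : Q) * ((leadersOn S σ).map (cycleProd h σ)).prod

lemma Mdet_eq_mooreOn {Q : Type*} [Ring Q] (H : Matrix (Fin n) (Fin n) Q) :
    Mdet H = mooreOn (fun i j => H i j) Finset.univ := by
  unfold Mdet mooreOn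
  simp only [Finset.subset_univ, Finset.filter_true]
  refine Finset.sum_congr rfl fun σ _ => ?_
  have h1 : mooreLeaders σ = leadersOn Finset.univ σ := by
    unfold mooreLeaders leadersOn
    congr 2
    ext i
    rw [Bool.eq_iff_iff]
    simp
  rw [mooreOrder, h1, List.map_flatten, List.prod_flatten, List.map_map, List.map_map]
  rfl

lemma mooreOn_empty {Q : Type*} [Ring Q] (h : Fin n → Fin n → Q) : mooreOn h ∅ = 1 := by
  have : (Finset.univ.filter fun σ : Equiv.Perm (Fin n) => σ.support ⊆ ∅) = {1} := by
    ext σ; simp [Finset.subset_empty]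
  rw [mooreOn, this]
  simp [leadersOn]

/-! The lemmas below concern the product of the cycle `(m l₁ l₂ …)` with a permutation `τ`
supported in `A`, where `l` lists `S.erase m \ A`. -/

section Glue

variable {S A : Finset (Fin n)} {m : Fin n} {l : List (Fin n)} {τ : Equiv.Perm (Fin n)}

lemma glue_apply_mem (hlA : l.toFinset = S.erase m \ A) (hA : A ⊆ S.erase m)
    (hτ : τ.support ⊆ A) (x : Fin n) (hx : x ∈ m :: l) :
    ((m :: l).formPerm * τ) x = (m :: l).formPerm x := by
  have hxA : x ∉ A := by
    rcases List.mem_cons.1 hx with rfl | hx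
    · intro h; simpa using hA h
    · rw [← List.mem_toFinset, hlA] at hx; exact (Finset.mem_sdiff.1 hx).2
  have : τ x = x := Equiv.Perm.notMem_support.1 fun h => hxA (hτ h)
  rw [Equiv.Perm.mul_apply, this]

lemma glue_nodup (hl : l.Nodup) (hlA : l.toFinset = S.erase m \ A) : (m :: l).Nodup := by
  refine List.nodup_cons.2 ⟨?_, hl⟩
  rw [← List.mem_toFinset, hlA]; simp

lemma apply_mem_of_support_subset (hτ : τ.support ⊆ A) {x : Fin n} (hx : x ∈ A) : τ x ∈ A := by
  by_cases h : τ x = x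
  · rwa [h]
  · exact hτ (Equiv.Perm.apply_mem_support.2 (Equiv.Perm.mem_support.2 h))

lemma glue_apply_of_mem (hlA : l.toFinset = S.erase m \ A) (hA : A ⊆ S.erase m)
    (hτ : τ.support ⊆ A) (x : Fin n) (hx : x ∈ A) : ((m :: l).formPerm * τ) x = τ x := by
  have h1 := apply_mem_of_support_subset hτ hx
  rw [Equiv.Perm.mul_apply]
  apply List.formPerm_apply_of_notMem
  intro h
  rcases List.mem_cons.1 h with h | h
  · rw [h] at h1; simpa using hA h1
  · rw [← List.mem_toFinset, hlA] at h; exact (Finset.mem_sdiff.1 h).2 h1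

lemma cycleList_subset (hτ : τ.support ⊆ A) {i : Fin n} (hi : i ∈ A) :
    ∀ x ∈ cycleList τ i, x ∈ A := by
  have hp : ∀ k : ℕ, (τ ^ k) i ∈ A := by
    intro k
    induction k with
    | zero => simpa
    | succ k ih =>
      rw [pow_succ', Equiv.Perm.mul_apply]; exact apply_mem_of_support_subset hτ ih
  intro x hx
  rcases List.mem_cons.1 hx with rfl | hx
  · exact hi
  · obtain ⟨k, -, rfl⟩ := List.mem_map.1 ((List.takeWhile_sublist _).subset hx)
    exact hp _

lemma glue_cycleList (hlA : l.toFinset = S.erase m \ A) (hA : A ⊆ S.erase m)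
    (hτ : τ.support ⊆ A) {i : Fin n} (hi : i ∈ A) :
    cycleList ((m :: l).formPerm * τ) i = cycleList τ i := by
  obtain ⟨t, h1, h2, h3⟩ := exists_cycleList τ i
  have hsub := cycleList_subset hτ hi
  rw [h1] at hsub ⊢
  refine cycleList_eq h2 fun x hx => ?_
  rw [glue_apply_of_mem hlA hA hτ x (hsub x hx), h3 x hx]

lemma glue_leaders (hl : l.Nodup) (hlA : l.toFinset = S.erase m \ A) (hA : A ⊆ S.erase m)
    (hτ : τ.support ⊆ A) (hm : m ∈ S) (hmin : ∀ x ∈ S, m ≤ x) :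
    leadersOn S ((m :: l).formPerm * τ) = leadersOn A τ ++ [m] := by
  unfold leadersOn
  rw [← List.reverse_cons]
  congr 1
  have hnd := glue_nodup hl hlA
  have hcm := cycleList_eq hnd (glue_apply_mem hlA hA hτ)
  have hAS : ∀ x ∈ A, m < x := fun x hx => by
    have := Finset.mem_erase.1 (hA hx)
    exact lt_of_le_of_ne (hmin x this.2) (Ne.symm this.1)
  have hlS : ∀ x ∈ l, x ∈ S ∧ x ≠ m ∧ x ∉ A := fun x hx => by
    rw [← List.mem_toFinset, hlA] at hx; simp at hx; tauto
  refine List.Pairwise.eq_of_mem_iff (r := (· < ·)) ((List.pairwise_lt_finRange n).filter _) ?_ ?_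
  · rw [List.pairwise_cons]
    refine ⟨fun x hx => ?_, (List.pairwise_lt_finRange n).filter _⟩
    simp only [List.mem_filter, decide_eq_true_eq] at hx
    exact hAS x hx.2.1
  · intro x
    simp only [List.mem_filter, List.mem_cons, decide_eq_true_eq, List.mem_finRange, true_and]
    by_cases hxm : x = m
    · subst hxm
      simp only [true_or, iff_true]
      refine ⟨hm, fun j hj => ?_⟩
      rw [hcm] at hj
      rcases List.mem_cons.1 hj with rfl | hj
      · exact le_rfl
      · exact hmin j (hlS j hj).1
    by_cases hxA : x ∈ A
    · have hxS : x ∈ S := Finset.mem_of_mem_erase (hA hxA)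
      rw [glue_cycleList hlA hA hτ hxA]
      simp [hxm, hxA, hxS]
    · simp only [hxm, hxA, false_or, false_and, iff_false]
      rintro ⟨hxS, hx⟩
      -- `x` lies on the cycle of `m`, so `m` lies on the cycle of `x`
      have hxl : x ∈ l := by
        rw [← List.mem_toFinset, hlA]; simp [hxm, hxS, hxA]
      obtain ⟨r, hr⟩ : (m :: l) ~r (l.drop (l.idxOf x) ++ m :: l.take (l.idxOf x)) := by
        have e : m :: l = (m :: l.take (l.idxOf x)) ++ l.drop (l.idxOf x) := by simp
        rw [e]
        exact List.isRotated_append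
      have hdx : l.drop (l.idxOf x) = x :: l.drop (l.idxOf x + 1) := by
        have h1 := List.idxOf_lt_length_iff.2 hxl
        rw [List.drop_eq_getElem_cons h1, List.getElem_idxOf]
      rw [hdx, List.cons_append] at hr
      have hrot : (m :: l) ~r (x :: (l.drop (l.idxOf x + 1) ++ m :: l.take (l.idxOf x))) := ⟨r, hr⟩
      have hf := List.formPerm_eq_of_isRotated hnd hrot
      have hcx := cycleList_eq (σ := (m :: l).formPerm * τ) (hrot.nodup_iff.1 hnd)
        (fun y hy => by
          rw [glue_apply_mem hlA hA hτ y (hrot.perm.mem_iff.2 hy), hf])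
      rw [hcx] at hx
      exact hxm (le_antisymm (hx m (by simp)) (hmin x hxS))

end Glue

/-- Splitting off the cycle through the smallest index, which stands last in the Moore order. The
bijection glues the cycle `(m l₁ l₂ …)` to a permutation `τ` supported off that cycle. -/
lemma mooreOn_step {Q : Type*} [Ring Q] (h : Fin n → Fin n → Q) (S : Finset (Fin n)) (m : Fin n)
    (hm : m ∈ S) (hmin : ∀ x ∈ S, m ≤ x) :
    mooreOn h S = conv (mooreOn h) (pathSum h m m) (S.erase m) := by
  have hR : conv (mooreOn h) (pathSum h m m) (S.erase m)
      = ∑ A ∈ (S.erase m).powerset, ∑ τ : Equiv.Perm (Fin n) with τ.support ⊆ A,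
        ∑ l ∈ orderings (S.erase m \ A),
          (((Equiv.Perm.sign τ : ℤ) : Q) * ((leadersOn A τ).map (cycleProd h τ)).prod) *
            ((-1) ^ (S.erase m \ A).card * walkProd h m l m) := by
    unfold conv mooreOn pathSum
    refine Finset.sum_congr rfl fun A _ => ?_
    rw [Finset.mul_sum, Finset.sum_mul_sum]
  rw [hR, mooreOn]
  simp_rw [Finset.sum_sigma' (Finset.filter _ _)]
  rw [Finset.sum_sigma']
  symm
  refine Finset.sum_bij'
    (fun x _ => (m :: x.2.2).formPerm * x.2.1)
    (fun σ _ => ⟨S.erase m \ (cycleList σ m).tail.toFinset,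
      ⟨(cycleList σ m).formPerm⁻¹ * σ, (cycleList σ m).tail⟩⟩) ?_ ?_ ?_ ?_ ?_
  · rintro ⟨A, τ, l⟩ hx
    simp only [Finset.mem_sigma, Finset.mem_powerset, Finset.mem_filter,
      Finset.mem_univ, true_and, mem_orderings] at hx ⊢
    obtain ⟨hA, hτ, hl, hlA⟩ := hx
    intro x hx
    by_contra hxS
    refine Equiv.Perm.mem_support.1 hx ?_
    have hxA : x ∉ A := fun h => hxS (Finset.mem_of_mem_erase (hA h))
    have : τ x = x := Equiv.Perm.notMem_support.1 fun h => hxA (hτ h)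
    rw [Equiv.Perm.mul_apply, this]
    apply List.formPerm_apply_of_notMem
    intro h
    rcases List.mem_cons.1 h with h | h
    · exact hxS (h ▸ hm)
    · rw [← List.mem_toFinset, hlA] at h
      simp only [Finset.mem_sdiff, Finset.mem_erase] at h
      exact hxS h.1.2
  · intro σ hσ
    simp only [Finset.mem_filter, Finset.mem_univ, true_and] at hσ
    obtain ⟨t, h1, h2, h3⟩ := exists_cycleList σ m
    have hsub := cycleList_subset hσ hm
    simp only [h1, List.tail_cons, Finset.mem_sigma, Finset.mem_powerset, Finset.mem_filter,
      Finset.mem_univ, true_and, mem_orderings] at hsub ⊢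
    have htS : t.toFinset ⊆ S.erase m := fun x hx => by
      rw [List.mem_toFinset] at hx
      refine Finset.mem_erase.2 ⟨?_, hsub x (List.mem_cons_of_mem _ hx)⟩
      rintro rfl
      exact (List.nodup_cons.1 h2).1 hx
    refine ⟨Finset.sdiff_subset, fun x hx => ?_, (List.nodup_cons.1 h2).2, ?_⟩
    · by_contra hxA
      refine Equiv.Perm.mem_support.1 hx ?_
      rw [Equiv.Perm.mul_apply, Equiv.Perm.inv_eq_iff_eq]
      by_cases hxc : x ∈ m :: t
      · exact h3 x hxc
      · rw [List.formPerm_apply_of_notMem hxc]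
        have hxS : x ∉ S := by
          simp only [List.mem_cons, not_or] at hxc
          simp only [Finset.mem_sdiff, Finset.mem_erase, List.mem_toFinset] at hxA
          tauto
        exact Equiv.Perm.notMem_support.1 fun h => hxS (hσ h)
    · rw [Finset.sdiff_sdiff_eq_self htS]
  · rintro ⟨A, τ, l⟩ hx
    simp only [Finset.mem_sigma, Finset.mem_powerset, Finset.mem_filter,
      Finset.mem_univ, true_and, mem_orderings] at hx ⊢
    obtain ⟨hA, hτ, hl, hlA⟩ := hx
    have hc := cycleList_eq (glue_nodup hl hlA) (glue_apply_mem hlA hA hτ)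
    simp [hc, hlA, Finset.sdiff_sdiff_eq_self hA]
  · intro σ hσ
    obtain ⟨t, h1, h2, h3⟩ := exists_cycleList σ m
    simp [h1]
  · rintro ⟨A, τ, l⟩ hx
    simp only [Finset.mem_sigma, Finset.mem_powerset, Finset.mem_filter,
      Finset.mem_univ, true_and, mem_orderings] at hx ⊢
    obtain ⟨hA, hτ, hl, hlA⟩ := hx
    have hnd := glue_nodup hl hlA
    rw [glue_leaders hl hlA hA hτ hm hmin, List.map_append, List.prod_append,
      List.map_singleton, List.prod_singleton, cycleProd_eq h hnd (glue_apply_mem hlA hA hτ),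
      Equiv.Perm.sign_mul, sign_formPerm_cons m l hnd]
    have hmap : (leadersOn A τ).map (cycleProd h ((m :: l).formPerm * τ))
        = (leadersOn A τ).map (cycleProd h τ) := by
      refine List.map_congr_left fun i hi => ?_
      have hiA : i ∈ A := by
        simp only [leadersOn, List.mem_reverse, List.mem_filter, decide_eq_true_eq] at hi
        exact hi.2.1
      unfold cycleProd
      rw [glue_cycleList hlA hA hτ hiA]
      congr 1
      refine List.map_congr_left fun x hx => ?_
      rw [glue_apply_of_mem hlA hA hτ x (cycleList_subset hτ hiA x hx)]
    have hcard : (S.erase m \ A).card = l.length := by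
      rw [← hlA, List.toFinset_card_of_nodup hl]
    rw [hmap, hcard]
    push_cast
    rcases neg_one_pow_eq_or Q l.length with e | e <;> rw [e] <;> noncomm_ring

end CycleLists

/-! ### The characteristic polynomial -/

section CharPoly

open Polynomial

variable {n : ℕ} {Q : Type*} [Ring Q]

lemma map_Mdet {Q' : Type*} [Ring Q'] (f : Q →+* Q') (H : Matrix (Fin n) (Fin n) Q) :
    f (Mdet H) = Mdet (H.map f) := by
  simp [Mdet, map_sum, map_list_prod, List.map_map, Function.comp_def]

lemma natDegree_walkProd_le {α : Type*} {h : α → α → Q[X]} (h1 : ∀ i j, (h i j).natDegree ≤ 1)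
    (j i : α) (l : List α) : (walkProd h j l i).natDegree ≤ l.length + 1 := by
  induction l generalizing j with
  | nil => simpa [walkProd] using h1 j i
  | cons k l ih =>
    refine natDegree_mul_le.trans ?_
    have := h1 j k
    have := ih k
    simp only [List.length_cons]
    omega

/-- A walk from `m` whose intermediate vertices differ from `m` (and exist) starts with an
off-diagonal entry, so its degree is less than its number of steps. -/
lemma natDegree_pathSum_le {α : Type*} [DecidableEq α] {h : α → α → Q[X]}
    (h1 : ∀ i j, (h i j).natDegree ≤ 1) (h0 : ∀ i j, i ≠ j → (h i j).natDegree = 0)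
    (m i : α) (A : Finset α) (hA : A.Nonempty) (hm : m ∉ A) :
    (pathSum h m i A).natDegree ≤ A.card := by
  have hs : (∑ l ∈ orderings A, walkProd h m l i).natDegree ≤ A.card := by
    refine natDegree_sum_le_of_forall_le _ _ fun l hl => ?_
    obtain ⟨hnd, rfl⟩ := mem_orderings.1 hl
    rw [List.toFinset_card_of_nodup hnd]
    cases l with
    | nil => simp at hA
    | cons k l =>
      have hmk : m ≠ k := by rintro rfl; simp at hm
      refine natDegree_mul_le.trans ?_
      rw [h0 m k hmk, zero_add]
      exact natDegree_walkProd_le h1 k i l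
  unfold pathSum
  rcases neg_one_pow_eq_or Q[X] A.card with e | e <;> rw [e] <;> simpa using hs

/-- The characteristic polynomial attached to each principal submatrix is monic of the expected
degree. -/
lemma mooreOn_charmatrix (a : Fin n → Fin n → Q) {h : Fin n → Fin n → Q[X]}
    (hh : ∀ i j, h i j = (if i = j then X else 0) - C (a i j)) (S : Finset (Fin n)) :
    (mooreOn h S).natDegree ≤ S.card ∧ (mooreOn h S).coeff S.card = 1 := by
  have h1 : ∀ i j, (h i j).natDegree ≤ 1 := fun i j => by
    rw [hh]; split_ifs
    · exact natDegree_X_sub_C_le _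
    · simp
  have h0 : ∀ i j, i ≠ j → (h i j).natDegree = 0 := fun i j hij => by
    rw [hh, if_neg hij]; simp
  induction hc : S.card using Nat.strong_induction_on generalizing S with
  | _ c ih =>
  subst hc
  rcases S.eq_empty_or_nonempty with rfl | hS
  · simp [mooreOn_empty]
  have hm := S.min'_mem hS
  set m := S.min' hS
  set T := S.erase m with hT
  have hcard : S.card = T.card + 1 := (Finset.card_erase_add_one hm).symm
  have hmT : m ∉ T := by simp [hT]
  have hsplit : mooreOn h S = mooreOn h T * (X - C (a m m))
      + ∑ A ∈ T.powerset.erase T, mooreOn h A * pathSum h m m (T \ A) := by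
    rw [mooreOn_step h S m hm fun x hx => S.min'_le x hx, conv,
      ← Finset.add_sum_erase _ _ (Finset.mem_powerset_self T), Finset.sdiff_self, pathSum_empty,
      hh, if_pos rfl]
  have hrest : (∑ A ∈ T.powerset.erase T, mooreOn h A * pathSum h m m (T \ A)).natDegree
      ≤ T.card := by
    refine natDegree_sum_le_of_forall_le _ _ fun A hA => ?_
    obtain ⟨hAT, hA⟩ := Finset.mem_erase.1 hA
    rw [Finset.mem_powerset] at hA
    have hne : (T \ A).Nonempty := by
      rw [Finset.sdiff_nonempty]; exact fun h => hAT (hA.antisymm h)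
    have e1 := (ih A.card (by have := Finset.card_le_card hA; omega) A rfl).1
    have e2 := natDegree_pathSum_le h1 h0 m m (T \ A) hne fun h => hmT (Finset.mem_sdiff.1 h).1
    have e3 := Finset.card_sdiff_add_card_eq_card hA
    refine natDegree_mul_le.trans ?_
    omega
  obtain ⟨d1, d2⟩ := ih T.card (by omega) T rfl
  rw [hsplit, hcard]
  constructor
  · refine (natDegree_add_le _ _).trans (max_le (natDegree_mul_le.trans ?_) (hrest.trans (by omega)))
    have := natDegree_X_sub_C_le (a m m)
    omega
  · rw [coeff_add, coeff_eq_zero_of_natDegree_lt (Nat.lt_succ_of_le hrest), mul_sub, coeff_sub,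
      coeff_mul_X, coeff_mul_C, coeff_eq_zero_of_natDegree_lt (Nat.lt_succ_of_le d1), d2]
    simp

/-- A polynomial of degree at most `r` with `r` central roots whose differences are not zero
divisors agrees at central points with its `r`-th coefficient times the product of the
corresponding linear factors. -/
lemma eval_eq_prod_roots {R ι : Type*} [CommRing R] [DecidableEq ι] (φ : R →+* Q)
    (hφ : ∀ r q, φ r * q = q * φ r) (c : ι → R) (s : Finset ι) (P : Q[X])
    (hdeg : P.natDegree ≤ s.card) (hroot : ∀ i ∈ s, P.eval (φ (c i)) = 0)
    (hreg : ∀ i ∈ s, ∀ j ∈ s, i ≠ j → ∀ q : Q, φ (c i - c j) * q = 0 → q = 0) (a : R) :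
    P.eval (φ a) = P.coeff s.card * φ (∏ i ∈ s, (a - c i)) := by
  induction s using Finset.induction_on generalizing P with
  | empty =>
    rw [eq_C_of_natDegree_le_zero (p := P) (by simpa using hdeg)]; simp
  | insert k s hk ih =>
    set P' := P /ₘ (X - C (φ (c k))) with hP'
    have hev' : ∀ r : R, ((X - C (φ (c k))) * P').eval (φ r) = φ (r - c k) * P'.eval (φ r) :=
      fun r => by
        rw [sub_mul, X_mul, eval_sub, eval_mul_X, eval_C_mul, map_sub, sub_mul, hφ r]
    have hfac : P = (X - C (φ (c k))) * P' := by
      nontriviality Q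
      have hdiv := modByMonic_add_div P (X - C (φ (c k)))
      have hlt := degree_modByMonic_lt P (monic_X_sub_C (φ (c k)))
      rw [degree_X_sub_C] at hlt
      have hC := eq_C_of_degree_le_zero (Order.lt_succ_iff.1 hlt)
      have h0 := hroot k (Finset.mem_insert_self _ _)
      rw [← hdiv, eval_add, hC, eval_C, hev', sub_self, map_zero, zero_mul, add_zero] at h0
      rwa [hC, h0, C_0, zero_add, eq_comm] at hdiv
    have hev : ∀ r : R, P.eval (φ r) = φ (r - c k) * P'.eval (φ r) := fun r => by
      rw [← hev', ← hfac]
    rw [Finset.card_insert_of_notMem hk] at hdeg ⊢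
    have hdeg' : P'.natDegree ≤ s.card := by
      nontriviality Q
      rw [hP', natDegree_divByMonic _ (monic_X_sub_C _), natDegree_X_sub_C]
      omega
    have hcoeff : P.coeff (s.card + 1) = P'.coeff s.card := by
      rw [hfac, sub_mul, X_mul, coeff_sub, coeff_mul_X, coeff_C_mul,
        coeff_eq_zero_of_natDegree_lt (Nat.lt_succ_of_le hdeg'), mul_zero, sub_zero]
    rw [hev, ih P' hdeg' ?_ ?_, Finset.prod_insert hk, map_mul, hcoeff, ← mul_assoc, hφ, mul_assoc]
    · intro i hi
      refine hreg i (Finset.mem_insert_of_mem hi) k (Finset.mem_insert_self _ _)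
        (fun e => hk (e ▸ hi)) _ ?_
      rw [← hev, hroot i (Finset.mem_insert_of_mem hi)]
    · exact fun i hi j hj => hreg i (Finset.mem_insert_of_mem hi) j (Finset.mem_insert_of_mem hj)

end CharPoly

/-! ### Dual quaternions -/

section DualQuaternions

instance : StarRing DualQuaternion where
  star_involutive q := by
    ext1
    · exact star_star q.fst
    · exact star_star q.snd
  star_mul p q := by
    ext1
    · exact star_mul p.fst q.fst
    · change star ((p * q).snd) = (star q * star p).snd
      rw [TrivSqZeroExt.snd_mul, TrivSqZeroExt.snd_mul]
      change star (p.fst * q.snd + p.snd * q.fst) = star q.fst * star p.snd + star q.snd * star p.fst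
      rw [star_add, star_mul, star_mul, add_comm]
  star_add p q := by
    ext1
    · exact star_add p.fst q.fst
    · exact star_add p.snd q.snd

lemma fst_star_dq (q : DualQuaternion) : (star q).fst = star q.fst := rfl

lemma snd_star_dq (q : DualQuaternion) : (star q).snd = star q.snd := rfl

lemma snd_mul_dq (p q : DualQuaternion) : (p * q).snd = p.fst * q.snd + p.snd * q.fst := rfl

/-- The embedding of the dual numbers into the dual quaternions, as a ring homomorphism. -/
def toDQHom : DualNumber ℝ →+* DualQuaternion where
  toFun := toDQ
  map_one' := by
    ext1
    · exact Quaternion.coe_one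
    · exact Quaternion.coe_zero
  map_zero' := by
    ext1
    · exact Quaternion.coe_zero
    · exact Quaternion.coe_zero
  map_add' a b := by
    ext1
    · exact Quaternion.coe_add _ _
    · exact Quaternion.coe_add _ _
  map_mul' a b := by
    ext1
    · exact Quaternion.coe_mul _ _
    · rw [snd_mul_dq]
      change (((a.fst * b.snd + a.snd * b.fst : ℝ)) : ℍ[ℝ]) = _
      push_cast
      rfl

lemma toDQ_comm (d : DualNumber ℝ) (q : DualQuaternion) : toDQ d * q = q * toDQ d := by
  ext1
  · exact Quaternion.coe_commutes _ _
  · rw [snd_mul_dq, snd_mul_dq, add_comm]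
    exact congrArg₂ (· + ·) (Quaternion.coe_commutes _ _) (Quaternion.coe_commutes _ _)

lemma star_toDQ (d : DualNumber ℝ) : star (toDQ d) = toDQ d := by
  ext1
  · exact Quaternion.star_coe _
  · exact Quaternion.star_coe _

/-- Self-conjugate dual quaternions are dual numbers, hence central. -/
lemma dq_central (a : DualQuaternion) (ha : star a = a) (b : DualQuaternion) : a * b = b * a := by
  have h1 : star a.fst = a.fst := congrArg TrivSqZeroExt.fst ha
  have h2 : star a.snd = a.snd := congrArg TrivSqZeroExt.snd ha
  obtain ⟨d, rfl⟩ : ∃ d, a = toDQ d := by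
    refine ⟨dqRe a, ?_⟩
    ext1
    · exact Quaternion.star_eq_self.1 h1
    · exact Quaternion.star_eq_self.1 h2
  exact toDQ_comm d b

/-- `Re (a b*) = Re (b* a)`, cleared of the factor `1/2`. -/
lemma dq_trace (a b : DualQuaternion) :
    a * star b + b * star a = star a * b + star b * a := by
  ext1
  · simp only [TrivSqZeroExt.fst_add, TrivSqZeroExt.fst_mul, fst_star_dq]
    ext <;> simp <;> ring
  · simp only [TrivSqZeroExt.snd_add, snd_mul_dq, fst_star_dq, snd_star_dq]
    ext <;> simp <;> ring

lemma dq_two (a b : DualQuaternion) (h : a + a = b + b) : a = b := by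
  have h1 : a.fst + a.fst = b.fst + b.fst := congrArg TrivSqZeroExt.fst h
  have h2 : a.snd + a.snd = b.snd + b.snd := congrArg TrivSqZeroExt.snd h
  ext1
  · rw [← two_smul ℝ, ← two_smul ℝ b.fst] at h1
    exact smul_right_injective _ (two_ne_zero' ℝ) h1
  · rw [← two_smul ℝ, ← two_smul ℝ b.snd] at h2
    exact smul_right_injective _ (two_ne_zero' ℝ) h2

/-- A dual number with nonzero standard part is not a zero divisor. -/
lemma toDQ_mul_eq_zero {d : DualNumber ℝ} (hd : d.fst ≠ 0) {q : DualQuaternion}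
    (h : toDQ d * q = 0) : q = 0 := by
  have hu : IsUnit d := by
    rw [TrivSqZeroExt.isUnit_iff_isUnit_fst]; exact hd.isUnit
  obtain ⟨u, rfl⟩ := hu
  have h1 : toDQHom (↑u⁻¹ * ↑u : DualNumber ℝ) * q = 0 := by
    rw [map_mul, mul_assoc]
    exact (congrArg (toDQHom ↑u⁻¹ * ·) h).trans (mul_zero _)
  simpa using h1

lemma mooreData {n : ℕ} (H : Matrix (Fin n) (Fin n) DualQuaternion) (hH : Hᴴ = H) :
    MooreData (fun i j => H i j) (mooreOn fun i j => H i j) :=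
  { central := dq_central
    trace := dq_trace
    two := dq_two
    herm := fun i j => congrFun (congrFun hH j) i
    empty := mooreOn_empty _
    step := mooreOn_step _ }

/-- The Moore determinant of a Hermitian matrix is self-conjugate, hence central. -/
lemma Mdet_comm {n : ℕ} (H : Matrix (Fin n) (Fin n) DualQuaternion) (hH : Hᴴ = H)
    (q : DualQuaternion) : Mdet H * q = q * Mdet H := by
  rw [Mdet_eq_mooreOn]
  exact (mooreData H hH).D_comm Finset.univ q

/-- The Moore determinant of a Hermitian matrix annihilates its left null vectors. -/
lemma mul_Mdet_eq_zero {n : ℕ} (H : Matrix (Fin n) (Fin n) DualQuaternion) (hH : Hᴴ = H)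
    (y : Fin n → DualQuaternion) (hy : y ᵥ* H = 0) (c : Fin n) : y c * Mdet H = 0 := by
  rw [Mdet_eq_mooreOn]
  exact (mooreData H hH).mul_D_univ_eq_zero y (fun j => congrFun hy j) c

open Polynomial in
/-- If the standard parts of the `n` dual numbers `lam i` are distinct and each `lam i` is a root of
the characteristic polynomial of `A`, then that polynomial is the product of the `l - lam i`. -/
lemma Mdet_eq_prod {n : ℕ} (A : Matrix (Fin n) (Fin n) DualQuaternion) (lam : Fin n → DualNumber ℝ)
    (hsimple : ∀ i j, (lam i).fst = (lam j).fst → i = j)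
    (hroot : ∀ i, Mdet (Matrix.diagonal (fun _ => toDQ (lam i)) - A) = 0) (l : DualNumber ℝ) :
    Mdet (Matrix.diagonal (fun _ => toDQ l) - A) = toDQ (∏ i, (l - lam i)) := by
  set K : Matrix (Fin n) (Fin n) DualQuaternion[X] :=
    Matrix.diagonal (fun _ => X) - A.map C with hK
  have hev : ∀ t : DualNumber ℝ,
      Mdet (Matrix.diagonal (fun _ => toDQ t) - A) = (Mdet K).eval (toDQHom t) := fun t => by
    have h1 := map_Mdet
      (eval₂RingHom' (RingHom.id DualQuaternion) (toDQHom t) fun a => (toDQ_comm t a).symm) K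
    refine Eq.trans ?_ h1.symm
    congr 1
    ext1 i j
    simp only [hK, Matrix.map_apply, Matrix.sub_apply, map_sub, Matrix.diagonal_apply]
    split_ifs <;> simp [eval₂RingHom'] <;> rfl
  have hdeg := mooreOn_charmatrix (fun i j => A i j) (h := fun i j => K i j)
    (fun i j => by simp [hK, Matrix.diagonal_apply]) Finset.univ
  rw [← Mdet_eq_mooreOn] at hdeg
  have := eval_eq_prod_roots toDQHom toDQ_comm lam Finset.univ (Mdet K) hdeg.1
    (fun i _ => by rw [← hev, hroot])
    (fun i _ j _ hij q hq => toDQ_mul_eq_zero (d := lam i - lam j)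
      (fun e => hij (hsimple i j (sub_eq_zero.1 e))) hq) l
  rw [hev, this, hdeg.2, one_mul]
  rfl

lemma prod_sub_eq_zero_iff {n : ℕ} (lam : Fin n → DualNumber ℝ)
    (hsimple : ∀ i j, (lam i).fst = (lam j).fst → i = j) (l : DualNumber ℝ) :
    ∏ i, (l - lam i) = 0 ↔ ∃ i, l = lam i := by
  constructor
  · intro h
    have hfst : ∏ i, (l.fst - (lam i).fst) = 0 := by
      have := congrArg (TrivSqZeroExt.fstHom ℝ ℝ ℝ) h
      rw [map_prod, map_zero] at this
      exact this
    obtain ⟨i, -, hi⟩ := Finset.prod_eq_zero_iff.1 hfst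
    refine ⟨i, ?_⟩
    rw [← Finset.mul_prod_erase _ _ (Finset.mem_univ i)] at h
    have hu : IsUnit (∏ j ∈ Finset.univ.erase i, (l - lam j)) := by
      rw [IsUnit.prod_iff]
      intro j hj
      rw [TrivSqZeroExt.isUnit_iff_isUnit_fst, isUnit_iff_ne_zero]
      intro e
      have e' : l.fst - (lam j).fst = 0 := e
      exact (Finset.mem_erase.1 hj).1 (hsimple j i (by linarith))
    exact sub_eq_zero.1 (hu.mul_left_eq_zero.1 h)
  · rintro ⟨i, rfl⟩
    exact Finset.prod_eq_zero (Finset.mem_univ i) (sub_self _)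

lemma toDQ_eq_zero_iff {d : DualNumber ℝ} : toDQ d = 0 ↔ d = 0 := by
  constructor
  · intro h
    have h1 : (d.fst : ℍ[ℝ]) = 0 := congrArg TrivSqZeroExt.fst h
    have h2 : (d.snd : ℍ[ℝ]) = 0 := congrArg TrivSqZeroExt.snd h
    ext1
    · exact Quaternion.coe_injective h1
    · exact Quaternion.coe_injective h2
  · rintro rfl
    exact map_zero toDQHom

lemma fst_mulVec_eq_zero {n : ℕ} (B : Matrix (Fin n) (Fin n) DualQuaternion)
    (x : Fin n → DualQuaternion) (hx : ∀ j, (x j).fst = 0) (i : Fin n) : ((B *ᵥ x) i).fst = 0 := by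
  change (∑ j, B i j * x j).fst = 0
  rw [TrivSqZeroExt.fst_sum]
  exact Finset.sum_eq_zero fun j _ => by rw [TrivSqZeroExt.fst_mul, hx, mul_zero]

end DualQuaternions

/-! ### Roots and eigenvalues -/

/-- If all eigenvalues of the standard part of a dual quaternion Hermitian matrix `A` are
simple (i.e. the standard parts `λ_{i,s}` of the eigenvalues of `A`, which are exactly the
eigenvalues of `A_s` with multiplicity, are pairwise distinct), then a dual number `λ` is a
root of the characteristic polynomial `p(λ) = Mdet(λI − A)` iff `λ` is an eigenvalue
of `A`. -/
theorem statement17 {n : ℕ} (A : Matrix (Fin n) (Fin n) DualQuaternion) (hA : Aᴴ = A)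
    (lam : Fin n → DualNumber ℝ) (hlam : HasEigenvalues A lam)
    (hsimple : ∀ i j, (lam i).fst = (lam j).fst → i = j) (l : DualNumber ℝ) :
    Mdet (Matrix.diagonal (fun _ => toDQ l) - A) = 0 ↔ IsEigenvalue A l := by
  obtain ⟨U, hU, hD⟩ := hlam
  -- `DualQuaternion` is Noetherian, so one-sided inverses of matrices over it are two-sided.
  have hU' : U * Uᴴ = 1 := mul_eq_one_symm hU
  have hUA : U * A = Matrix.diagonal (fun i => toDQ (lam i)) * U := by
    rw [← hD, Matrix.mul_assoc _ Uᴴ, hU, Matrix.mul_one]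
  have hAU : A * Uᴴ = Uᴴ * Matrix.diagonal (fun i => toDQ (lam i)) := by
    rw [← hD, ← Matrix.mul_assoc, ← Matrix.mul_assoc, hU, Matrix.one_mul]
  have hroot : ∀ i, Mdet (Matrix.diagonal (fun _ => toDQ (lam i)) - A) = 0 := by
    intro i
    set H := Matrix.diagonal (fun _ => toDQ (lam i)) - A with hH
    have hherm : Hᴴ = H := by
      rw [hH, Matrix.conjTranspose_sub, hA, Matrix.diagonal_conjTranspose]
      congr 2
      funext _
      exact star_toDQ _
    have hnull : U i ᵥ* H = 0 := by
      funext j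
      have h1 := congrFun (congrFun hUA i) j
      rw [Matrix.diagonal_mul] at h1
      have h2 : (U i ᵥ* A) j = toDQ (lam i) * U i j := h1
      rw [hH, Matrix.vecMul_sub, Pi.sub_apply, h2, Matrix.vecMul_diagonal, toDQ_comm, sub_self]
      rfl
    have h0 := mul_Mdet_eq_zero H hherm (U i) hnull
    -- `Mdet H` is central, so it factors out of the `(i, i)` entry of `U * Uᴴ = 1`.
    have h1 : ∑ j, U i j * Uᴴ j i = 1 := by
      have := congrFun (congrFun hU' i) i
      rwa [Matrix.mul_apply, Matrix.one_apply_eq] at this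
    rw [← one_mul (Mdet H), ← h1, Finset.sum_mul]
    refine Finset.sum_eq_zero fun j _ => ?_
    rw [mul_assoc, ← Mdet_comm H hherm, ← mul_assoc, h0, zero_mul]
  rw [Mdet_eq_prod A lam hsimple hroot l]
  rw [toDQ_eq_zero_iff, prod_sub_eq_zero_iff lam hsimple]
  constructor
  · rintro ⟨i, rfl⟩
    -- Column `i` of `Uᴴ` is an eigenvector.
    refine ⟨fun j => Uᴴ j i, fun h => ?_, ?_⟩
    · have h1 := fst_mulVec_eq_zero U (fun j => Uᴴ j i) (fun j => congrFun h j) i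
      have h2 : (U *ᵥ fun j => Uᴴ j i) i = 1 := by
        have := congrFun (congrFun hU' i) i
        rwa [Matrix.one_apply_eq] at this
      rw [h2] at h1
      exact one_ne_zero h1
    · funext j
      have h1 := congrFun (congrFun hAU j) i
      rwa [Matrix.mul_diagonal] at h1
  · rintro ⟨x, hx, hAx⟩
    have hy : ∀ i, toDQ (l - lam i) * (U *ᵥ x) i = 0 := by
      intro i
      have h1 : U *ᵥ (A *ᵥ x) = Matrix.diagonal (fun i => toDQ (lam i)) *ᵥ (U *ᵥ x) := by
        rw [Matrix.mulVec_mulVec, hUA, ← Matrix.mulVec_mulVec]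
      have h2 : (U *ᵥ (A *ᵥ x)) i = (U *ᵥ x) i * toDQ l := by
        rw [hAx]
        change ∑ j, U i j * (x j * toDQ l) = (∑ j, U i j * x j) * toDQ l
        simp only [Finset.sum_mul, mul_assoc]
      rw [h1, Matrix.mulVec_diagonal] at h2
      rw [show toDQ (l - lam i) = toDQ l - toDQ (lam i) from map_sub toDQHom _ _, sub_mul, h2,
        toDQ_comm, sub_self]
    obtain ⟨i, hi⟩ : ∃ i, ((U *ᵥ x) i).fst ≠ 0 := by
      by_contra! hcon
      refine hx (funext fun j => ?_)
      have h1 := fst_mulVec_eq_zero Uᴴ (U *ᵥ x) hcon j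
      rwa [Matrix.mulVec_mulVec, hU, Matrix.one_mulVec] at h1
    have hu : IsUnit ((U *ᵥ x) i) := by
      rw [TrivSqZeroExt.isUnit_iff_isUnit_fst]
      exact hi.isUnit
    exact ⟨i, sub_eq_zero.1 (toDQ_eq_zero_iff.1 (hu.mul_left_eq_zero.1 (hy i)))⟩

end DQPaper
end
end

section
/- Let A be an n×n dual quaternion Hermitian matrix with eigenvalues λ₁,…,λ_n, let p(λ) = (λ − λ₁)(λ − λ₂) ⋯ (λ − λ_n) be its characteristic polynomial, and let p_q(λ) = |λ − λ₁|² |λ − λ₂|² ⋯ |λ − λ_n|² be the quasi-characteristic polynomial of Ling and Qi. Then for every dual number λ, p_q(λ) = |p(λ)|². -/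
/-!
The magnitude of a dual number `d`, regarded as a dual quaternion, satisfies `|d|² = d²`
(`dqMag_toDQ_sq`). Hence both `p_q(λ)` and `|p(λ)|²` equal `∏ i, (λ - λ_i)²` in the
commutative ring of dual numbers.
-/

/-!
Formalization background for "Moore Determinant of Dual Quaternion Hermitian Matrices"
(Cui, Qi, Song, Wang).

A dual quaternion is `q = q_s + q_d ε` with `q_s, q_d` quaternions, `ε² = 0`; it is modeled
by `DualNumber (Quaternion ℝ)`.
-/

open Quaternion Matrix

noncomputable section

namespace DQPaper

/-- Squaring removes the absolute value: for `d = a + b ε` with `a ≠ 0` one has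
`|d|² = a² + 2ab ε`, and for `a = 0` both sides vanish since `ε² = 0`. -/
theorem dqMag_toDQ_sq (d : DualNumber ℝ) : dqMag (toDQ d) ^ 2 = d ^ 2 := by
  have h1 : (toDQ d).fst = (d.fst : ℍ[ℝ]) := rfl
  have h2 : (toDQ d).snd = (d.snd : ℍ[ℝ]) := rfl
  by_cases h : d.fst = 0
  · have h0 : (toDQ d).fst = 0 := by simp [h1, h]
    have hf : (dqMag (toDQ d)).fst = 0 := congrArg Prod.fst (if_pos h0)
    apply TrivSqZeroExt.ext <;> simp [pow_two, h, hf]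
  · have h0 : (toDQ d).fst ≠ 0 := fun e => h (Quaternion.coe_injective (h1.symm.trans e))
    have habs : |d.fst| ≠ 0 := abs_ne_zero.mpr h
    have hf : (dqMag (toDQ d)).fst = ‖(toDQ d).fst‖ := congrArg Prod.fst (if_neg h0)
    have hs : (dqMag (toDQ d)).snd =
        ((star (toDQ d).fst * (toDQ d).snd + star (toDQ d).snd * (toDQ d).fst).re) /
          (2 * ‖(toDQ d).fst‖) := congrArg Prod.snd (if_neg h0)
    rw [h1] at hf
    rw [h1, h2] at hs
    apply TrivSqZeroExt.ext
    · simp [pow_two, hf]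
    · simp [pow_two, hf, hs]
      field_simp
      ring

/-- For a dual quaternion Hermitian matrix `A` with eigenvalues `λ₁, …, λ_n`, the
quasi-characteristic polynomial `p_q(λ) = |λ − λ₁|² ⋯ |λ − λ_n|²` of Ling and Qi and the
characteristic polynomial `p(λ) = (λ − λ₁) ⋯ (λ − λ_n)` satisfy `p_q(λ) = |p(λ)|²` for
every dual number `λ`. -/
theorem statement18 {n : ℕ} (A : Matrix (Fin n) (Fin n) DualQuaternion) (hA : Aᴴ = A)
    (lam : Fin n → DualNumber ℝ) (hlam : HasEigenvalues A lam) (l : DualNumber ℝ) :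
    (∏ i, dqMag (toDQ (l - lam i)) ^ 2) = dqMag (toDQ (∏ i, (l - lam i))) ^ 2 := by
  simp only [dqMag_toDQ_sq, Finset.prod_pow]

end DQPaper
end
end
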